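/- For every fair-division instance with non-negative valuations there exists a connected allocation A = (A_1,…,A_n) that is EF1P_g^c, i.e., v_i^+(A_i) ≥ v_i^-(A_j) holds for all agents i, j. -/

import Mathlib

/-!
Let `n = d + 1`. Every item is subdivided into `n` parts, so that the path becomes the grid
`0, …, M` with `M = m n`, and it is cut into `n` pieces by `d` knives at grid points. Such
divisions are the grid points of a simplex, which is triangulated by Kuhn simplices (`vert`,
`IsCell`).

Each grid point is owned by an agent (`owner`) in such a way that every cell has one vertex for each
agent, and it is labelled by a piece that its owner likes best with respect to the integer values
`cutValue`. As valuations are non-negative and empty pieces are worth `0`, the label can be taken to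
be a nonempty piece (`exists_preferred_label`). This is the hypothesis of Sperner's lemma, which
yields a cell with all labels (`exists_rainbow_cell`), that is, with a bijection between agents and
pieces. Sperner's lemma is proved by the usual parity argument: `odd_doors_iff` counts the doors
of one cell, `pivot` pairs the doors not lying in the face where piece `0` is empty
(`even_inner_doors`), and the doors in that face are rainbow cells in one dimension less
(`card_boundary_doors`).

It remains to round. On a cell each knife moves by at most one grid step, so among `n` possible
offsets there is one for which no knife passes a rounding threshold (`exists_offset`,
`round_vert`). All vertices of the cell then give the same integral bundles `B_j`. The values
`cutValue` are designed such that for every offset, `v⁻(B_j) ≤ cutValue ≤ v⁺(B_j)` for piece `j`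
(`brackets_cutValue`). At the vertex owned by agent `i`, whose bundle comes from a favourite piece
there, this gives
`v_i⁻(B_j) ≤ cutValue (piece j) ≤ cutValue (own piece) ≤ v_i⁺(own bundle)`.
-/

/-- A bundle is connected (w.r.t. the path `1, …, m`) if it is an interval
(possibly empty). -/
def IsConnectedBundle (A : Finset ℕ) : Prop := ∃ s t : ℕ, A = Finset.Icc s t

/-- `A` is an allocation of the items `M = {1, …, m}` to the `n` agents:
pairwise disjoint bundles whose union is `M`. -/
def IsAllocation (m : ℕ) {n : ℕ} (A : Fin n → Finset ℕ) : Prop :=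
  (∀ i j : Fin n, i ≠ j → Disjoint (A i) (A j)) ∧
  Finset.univ.biUnion A = Finset.Icc 1 m

/-- `v⁺(A)`: for a nonempty connected bundle `A`, the maximum of `v` over `A`,
`A` minus its smallest element and `A` minus its largest element; `0` on `∅`. -/
def vplus (v : Finset ℕ → ℤ) (A : Finset ℕ) : ℤ :=
  if h : A.Nonempty then
    max (v A) (max (v (A.erase (A.min' h))) (v (A.erase (A.max' h))))
  else 0

/-- `v⁻(A)`: for a nonempty connected bundle `A`, the minimum of `v` over `A`,
`A` minus its smallest element and `A` minus its largest element; `0` on `∅`. -/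
def vminus (v : Finset ℕ → ℤ) (A : Finset ℕ) : ℤ :=
  if h : A.Nonempty then
    min (v A) (min (v (A.erase (A.min' h))) (v (A.erase (A.max' h))))
  else 0

/-! ### Parity of the doors of a labelled simplex -/

open Finset in
/-- Call an index `i` a door if the other indices already carry every nonzero label. For any
labelling `g` of `0, …, n` with `n + 1` labels the number of doors is odd (in fact `1`, as opposed
to `0` or `2`) exactly when all labels occur. -/
theorem odd_doors_iff {n : ℕ} (g : ℕ → Fin (n + 1)) :
    Odd #{i ∈ range (n + 1) | ∀ b, b ≠ 0 → ∃ i' ≤ n, i' ≠ i ∧ g i' = b} ↔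
      ∀ b, ∃ i ≤ n, g i = b := by
  constructor
  · intro hodd
    by_contra hns
    obtain ⟨i, hi⟩ := Finset.card_pos.1 hodd.pos
    rw [mem_filter, mem_range] at hi
    obtain ⟨hin, hdoor⟩ := hi
    have h0 : ∀ k ≤ n, g k ≠ 0 := by
      intro k hk hk0
      refine hns fun b => ?_
      by_cases hb : b = 0
      · exact ⟨k, hk, hb ▸ hk0⟩
      · obtain ⟨k', h1, -, h2⟩ := hdoor b hb
        exact ⟨k', h1, h2⟩
    have hinj : Set.InjOn g ((range (n + 1)).erase i : Finset ℕ) := by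
      apply Finset.injOn_of_surjOn_of_card_le (t := univ.erase (0 : Fin (n + 1)))
      · intro k hk
        have := h0 k (by simp at hk; omega)
        simpa using this
      · intro b hb
        obtain ⟨k, h1, h2, h3⟩ := hdoor b (by simpa using hb)
        exact ⟨k, by simp; omega, h3⟩
      · rw [card_erase_of_mem (by simpa using hin), card_erase_of_mem (by simp)]; simp
    obtain ⟨i', hi'n, hne, hgi⟩ := hdoor (g i) (h0 i (by omega))
    -- The label `0` is missing and exactly one nonzero label is repeated, at `i` and `i'`: these
    -- two indices are the only doors.
    have hset : {k ∈ range (n + 1) | ∀ b, b ≠ 0 → ∃ k' ≤ n, k' ≠ k ∧ g k' = b} = {i, i'} := by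
      ext k
      simp only [mem_filter, mem_range, mem_insert, mem_singleton]
      constructor
      · rintro ⟨hk, hkd⟩
        by_contra! hc
        obtain ⟨k', h1, h2, h3⟩ := hkd (g k) (h0 k (by omega))
        by_cases hk' : k' = i
        · subst hk'
          exact hc.2 (hinj (by simp; omega) (by simp; omega) (h3.symm.trans hgi.symm))
        · exact h2 (hinj (by simp; omega) (by simp; omega) h3)
      · rintro (rfl | rfl)
        · exact ⟨hin, hdoor⟩
        · refine ⟨by omega, fun b hb => ?_⟩
          obtain ⟨k', h1, h2, h3⟩ := hdoor b hb
          by_cases hki : k' = k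
          · exact ⟨i, by omega, hne.symm, by rw [← hgi, ← hki, h3]⟩
          · exact ⟨k', h1, hki, h3⟩
    rw [hset, card_pair hne.symm] at hodd
    exact absurd hodd (by decide)
  · intro hs
    have hinj : Set.InjOn g (range (n + 1) : Finset ℕ) := by
      apply Finset.injOn_of_surjOn_of_card_le (t := univ)
      · intro k _; simp
      · intro b _
        obtain ⟨k, h1, h3⟩ := hs b
        exact ⟨k, by simp; omega, h3⟩
      · simp
    obtain ⟨i, hin, hi0⟩ := hs 0
    have hset : {k ∈ range (n + 1) | ∀ b, b ≠ 0 → ∃ k' ≤ n, k' ≠ k ∧ g k' = b} = {i} := by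
      ext k
      simp only [mem_filter, mem_range, mem_singleton]
      constructor
      · rintro ⟨hk, hkd⟩
        by_contra hc
        have hgk : g k ≠ 0 := fun h =>
          hc (hinj (by simp; omega) (by simp; omega) (h.trans hi0.symm))
        obtain ⟨k', h1, h2, h3⟩ := hkd (g k) hgk
        exact h2 (hinj (by simp; omega) (by simp; omega) h3)
      · rintro rfl
        refine ⟨by omega, fun b hb => ?_⟩
        obtain ⟨k', h1, h3⟩ := hs b
        refine ⟨k', h1, ?_, h3⟩
        rintro rfl
        exact hb (h3.symm.trans hi0)
    rw [hset]
    simp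

/-! ### The Kuhn triangulation of the simplex of divisions -/

open Equiv

/-- The position of the `j`-th knife: `M` for `j = 0`, then the coordinates of `p`, then `0`. The
`j`-th piece is the interval from knife `j + 1` to knife `j`, so pieces are numbered from right to
left. -/
def knife (M : ℤ) {d : ℕ} (p : Fin d → ℤ) : ℕ → ℤ
  | 0 => M
  | j + 1 => if h : j < d then p ⟨j, h⟩ else 0

/-- The step at which knife `j` moves in a Kuhn simplex `(p, τ)`: it is raised by one between the
vertices with indices `moveTime τ j` and `moveTime τ j + 1`. The value `d` stands for never and is
given to the two end knives. -/
def moveTime {d : ℕ} (τ : Perm (Fin d)) : ℕ → ℕ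
  | 0 => d
  | j + 1 => if h : j < d then τ ⟨j, h⟩ else d

/-- The `i`-th vertex, `0 ≤ i ≤ d`, of the simplex `(p, τ)` of the Kuhn triangulation: starting
from `p`, the coordinates have been raised by one in the order given by `τ`, and `i` of them so
far. -/
def vert {d : ℕ} (p : Fin d → ℤ) (τ : Perm (Fin d)) (i : ℕ) : Fin d → ℤ :=
  fun k => p k + if (τ k : ℕ) < i then 1 else 0

/-- The knives are in decreasing order, so that `p` is a grid point of the simplex
`M ≥ p 0 ≥ … ≥ p (d - 1) ≥ 0`. -/
def IsDivision (M : ℤ) {d : ℕ} (p : Fin d → ℤ) : Prop :=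
  ∀ j ≤ d, knife M p (j + 1) ≤ knife M p j

/-- All vertices of the Kuhn simplex `(p, τ)` lie in the simplex of divisions. -/
def IsCell (M : ℤ) {d : ℕ} (p : Fin d → ℤ) (τ : Perm (Fin d)) : Prop :=
  ∀ i ≤ d, IsDivision M (vert p τ i)

/-- The label of a division is the number of a nonempty piece; this is the boundary condition of
Sperner's lemma. -/
def IsSperner (M : ℤ) {d : ℕ} (l : (Fin d → ℤ) → Fin (d + 1)) : Prop :=
  ∀ p, IsDivision M p → knife M p (l p + 1) ≠ knife M p (l p)

/-- For a cell `(p, τ)` and a vertex index `i`, written as `c = (p, τ, i)`: the neighbouring Kuhn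
simplex across the facet opposite to vertex `i`, together with the index of its vertex off that
facet. An inner vertex is reflected by swapping two consecutive moves; dropping the first (last)
vertex turns the first (last) move into the last (first) one. -/
def pivot {d : ℕ} (c : (Fin (d + 1) → ℤ) × Perm (Fin (d + 1)) × ℕ) :
    (Fin (d + 1) → ℤ) × Perm (Fin (d + 1)) × ℕ :=
  if c.2.2 = 0 then
    (fun k => c.1 k + if (c.2.1 k : ℕ) = 0 then 1 else 0,
      c.2.1.trans (finRotate (d + 1)).symm, d + 1)
  else if c.2.2 = d + 1 then
    (fun k => c.1 k - if (c.2.1 k : ℕ) = d then 1 else 0, c.2.1.trans (finRotate (d + 1)), 0)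
  else
    (c.1, c.2.1.trans (swap (Fin.ofNat (d + 1) (c.2.2 - 1)) (Fin.ofNat (d + 1) c.2.2)), c.2.2)

theorem knife_vert (M : ℤ) {d : ℕ} (p : Fin d → ℤ) (τ : Perm (Fin d)) {i : ℕ} (hi : i ≤ d)
    (j : ℕ) :
    knife M (vert p τ i) j = knife M p j + if moveTime τ j < i then 1 else 0 := by
  cases j with
  | zero => simp [knife, moveTime]; omega
  | succ j =>
    by_cases h : j < d
    · simp [knife, moveTime, vert, h]
    · simp [knife, moveTime, h]; omega

theorem moveTime_inj {d : ℕ} (τ : Perm (Fin d)) {j k : ℕ} (h : moveTime τ j = moveTime τ k)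
    (hd : moveTime τ j < d) : j = k := by
  cases j with
  | zero => simp [moveTime] at hd
  | succ j =>
    cases k with
    | zero => rw [h] at hd; simp [moveTime] at hd
    | succ k =>
      simp only [moveTime] at h hd
      split_ifs at h hd
      · have := τ.injective (Fin.ext h)
        simpa using this
      all_goals omega

theorem val_finRotate {d : ℕ} (x : Fin (d + 1)) :
    (finRotate (d + 1) x : ℕ) = if (x : ℕ) = d then 0 else (x : ℕ) + 1 := by
  rw [coe_finRotate]
  simp [Fin.ext_iff]

theorem val_finRotate_symm {d : ℕ} (x : Fin (d + 1)) :
    ((finRotate (d + 1)).symm x : ℕ) = if (x : ℕ) = 0 then d else (x : ℕ) - 1 := by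
  obtain ⟨y, rfl⟩ := (finRotate (d + 1)).surjective x
  rw [symm_apply_apply, val_finRotate]
  have := y.2
  split_ifs <;> simp_all

theorem val_swap {d i : ℕ} (hid : i < d + 1) (x : Fin (d + 1)) :
    (swap (Fin.ofNat (d + 1) (i - 1)) (Fin.ofNat (d + 1) i) x : ℕ) =
      if (x : ℕ) = i - 1 then i else if (x : ℕ) = i then i - 1 else x := by
  rw [swap_apply_def]
  have h1 : i % (d + 1) = i := Nat.mod_eq_of_lt hid
  have h2 : (i - 1) % (d + 1) = i - 1 := Nat.mod_eq_of_lt (by omega)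
  simp only [Fin.ext_iff, Fin.val_ofNat, h1, h2]
  split_ifs <;> simp [h1, h2]

theorem pivot_pivot {d : ℕ} (c : (Fin (d + 1) → ℤ) × Perm (Fin (d + 1)) × ℕ)
    (hc : c.2.2 ≤ d + 1) : pivot (pivot c) = c := by
  obtain ⟨p, τ, i⟩ := c
  simp only at hc
  by_cases h0 : i = 0
  · subst h0
    simp only [pivot, if_true]
    refine Prod.ext (funext fun k => ?_) (Prod.ext (Equiv.ext fun k => ?_) ?_)
    · have := (τ k).2
      simp only [trans_apply, val_finRotate_symm, Nat.succ_ne_zero, if_false]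
      split_ifs <;> omega
    · simp
    · simp
  by_cases h1 : i = d + 1
  · subst h1
    simp only [pivot, if_true, if_neg h0]
    refine Prod.ext (funext fun k => ?_) (Prod.ext (Equiv.ext fun k => ?_) ?_)
    · simp only [trans_apply, val_finRotate]
      by_cases hk : (τ k : ℕ) = d <;> simp [hk]
    · simp
    · simp
  · simp only [pivot, if_neg h0, if_neg h1]
    refine Prod.ext rfl (Prod.ext (Equiv.ext fun k => ?_) rfl)
    simp

theorem pivot_ne {d : ℕ} (c : (Fin (d + 1) → ℤ) × Perm (Fin (d + 1)) × ℕ)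
    (hc : c.2.2 ≤ d + 1) : pivot c ≠ c := by
  obtain ⟨p, τ, i⟩ := c
  simp only at hc
  intro h
  by_cases h0 : i = 0
  · subst h0
    simp [pivot] at h
  by_cases h1 : i = d + 1
  · subst h1
    simp [pivot] at h
  · simp only [pivot, if_neg h0, if_neg h1] at h
    have h2 := congrArg (fun c => c.2.1) h
    obtain ⟨k, hk⟩ := τ.surjective ⟨i, by omega⟩
    have h3 := congrArg Fin.val (Equiv.congr_fun h2 k)
    simp only [trans_apply] at h3
    rw [val_swap (by omega), hk] at h3
    simp at h3
    omega

/-- Each vertex of the facet is also a vertex of the neighbour, other than the one `pivot` marks. -/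
theorem vert_pivot {d : ℕ} (c : (Fin (d + 1) → ℤ) × Perm (Fin (d + 1)) × ℕ)
    (hc : c.2.2 ≤ d + 1) {i : ℕ} (hi : i ≤ d + 1) (hne : i ≠ c.2.2) :
    ∃ i' ≤ d + 1, i' ≠ (pivot c).2.2 ∧ vert (pivot c).1 (pivot c).2.1 i' = vert c.1 c.2.1 i := by
  obtain ⟨p, τ, i₀⟩ := c
  simp only at hc hne ⊢
  by_cases h0 : i₀ = 0
  · subst h0
    refine ⟨i - 1, by omega, by simp [pivot]; omega, funext fun k => ?_⟩
    simp only [pivot, vert, if_true, trans_apply, val_finRotate_symm]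
    have := (τ k).2
    split_ifs <;> omega
  by_cases h1 : i₀ = d + 1
  · subst h1
    refine ⟨i + 1, by omega, by simp [pivot], funext fun k => ?_⟩
    simp only [pivot, vert, if_true, if_neg h0, trans_apply, val_finRotate]
    have := (τ k).2
    split_ifs <;> omega
  · refine ⟨i, hi, by simp [pivot, h0, h1, hne], funext fun k => ?_⟩
    simp only [pivot, vert, if_neg h0, if_neg h1, trans_apply]
    rw [val_swap (by omega)]
    have := (τ k).2
    split_ifs <;> omega

/-! ### Doors and their neighbours -/

/-- The vertices other than the `i`-th one carry all nonzero labels. The label `0` plays the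
special role because piece `0` is empty on the face used for the induction. -/
def IsDoor {d : ℕ} (l : (Fin d → ℤ) → Fin (d + 1)) (p : Fin d → ℤ) (τ : Perm (Fin d))
    (i : ℕ) : Prop :=
  ∀ b, b ≠ 0 → ∃ i' ≤ d, i' ≠ i ∧ l (vert p τ i') = b

/-- Every label occurs at some vertex of the cell. -/
def IsRainbow {d : ℕ} (l : (Fin d → ℤ) → Fin (d + 1)) (p : Fin d → ℤ) (τ : Perm (Fin d)) :
    Prop :=
  ∀ b, ∃ i ≤ d, l (vert p τ i) = b

theorem isDoor_pivot {d : ℕ} {l : (Fin (d + 1) → ℤ) → Fin (d + 1 + 1)}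
    {c : (Fin (d + 1) → ℤ) × Perm (Fin (d + 1)) × ℕ} (hc : c.2.2 ≤ d + 1)
    (h : IsDoor l c.1 c.2.1 c.2.2) :
    IsDoor l (pivot c).1 (pivot c).2.1 (pivot c).2.2 := by
  intro b hb
  obtain ⟨i, hi, hne, rfl⟩ := h b hb
  obtain ⟨i', h1, h2, h3⟩ := vert_pivot c hc hi hne
  exact ⟨i', h1, h2, by rw [h3]⟩

theorem knife_pivot {d : ℕ} (M : ℤ) (c : (Fin (d + 1) → ℤ) × Perm (Fin (d + 1)) × ℕ) (j : ℕ) :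
    knife M (pivot c).1 j = knife M c.1 j +
      if c.2.2 = 0 then (if moveTime c.2.1 j = 0 then 1 else 0)
      else if c.2.2 = d + 1 then (if moveTime c.2.1 j = d then -1 else 0) else 0 := by
  obtain ⟨p, τ, i⟩ := c
  cases j with
  | zero => simp only [knife, moveTime]; split_ifs <;> first | contradiction | omega
  | succ j =>
    by_cases h : j < d + 1
    · simp only [pivot, knife, moveTime, h, dif_pos]; split_ifs <;> simp_all <;> omega
    · simp only [pivot, knife, moveTime, h, dif_neg, not_false_eq_true]
      split_ifs <;> first | contradiction | omega

theorem moveTime_pivot {d : ℕ} (c : (Fin (d + 1) → ℤ) × Perm (Fin (d + 1)) × ℕ)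
    (hc : c.2.2 ≤ d + 1) (j : ℕ) :
    moveTime (pivot c).2.1 j =
      if moveTime c.2.1 j = d + 1 then d + 1
      else if c.2.2 = 0 then (if moveTime c.2.1 j = 0 then d else moveTime c.2.1 j - 1)
      else if c.2.2 = d + 1 then (if moveTime c.2.1 j = d then 0 else moveTime c.2.1 j + 1)
      else if moveTime c.2.1 j = c.2.2 - 1 then c.2.2
      else if moveTime c.2.1 j = c.2.2 then c.2.2 - 1 else moveTime c.2.1 j := by
  obtain ⟨p, τ, i⟩ := c
  simp only at hc
  cases j with
  | zero => simp [moveTime]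
  | succ j =>
    by_cases h : j < d + 1
    · have := (τ ⟨j, h⟩).2
      simp only [moveTime, h, dif_pos, pivot]
      rw [if_neg (by omega : ¬ (τ ⟨j, h⟩ : ℕ) = d + 1)]
      by_cases h0 : i = 0
      · simp only [h0, if_true, trans_apply, val_finRotate_symm]
      by_cases h1 : i = d + 1
      · simp only [h1, if_true, if_neg (Nat.succ_ne_zero d), trans_apply, val_finRotate]
      · simp only [h0, h1, if_false, trans_apply]
        rw [val_swap (by omega)]
    · simp [moveTime, h]

theorem moveTime_le {d : ℕ} (τ : Perm (Fin d)) (j : ℕ) : moveTime τ j ≤ d := by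
  cases j with
  | zero => simp [moveTime]
  | succ j => simp only [moveTime]; split_ifs <;> omega

/-- The arithmetic behind `isCell_pivot`, for two consecutive knives at positions `P ≥ P'` with
move times `T` and `T'`. If they are in the right order at the vertices `0`, `i`, `d + 1` and those
next to `i₀`, but in the wrong order at the new vertex produced by `pivot` (this is `hlt`), then
they coincide at the vertex `i ≠ i₀`. -/
theorem pivot_arith {d i₀ i T T' : ℕ} {P P' : ℤ} (hc : i₀ ≤ d + 1) (hT : T ≤ d + 1)
    (hT' : T' ≤ d + 1) (hinj : T = T' → ¬ T < d + 1)
    (e0 : P' + (if T' < 0 then 1 else 0) ≤ P + (if T < 0 then 1 else 0))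
    (e1 : P' + (if T' < i then 1 else 0) ≤ P + (if T < i then 1 else 0))
    (e2 : P' + (if T' < d + 1 then 1 else 0) ≤ P + (if T < d + 1 then 1 else 0))
    (e3 : P' + (if T' < i₀ - 1 then 1 else 0) ≤ P + (if T < i₀ - 1 then 1 else 0))
    (e4 : P' + (if T' < min (i₀ + 1) (d + 1) then 1 else 0) ≤
      P + (if T < min (i₀ + 1) (d + 1) then 1 else 0))
    (hlt : (P + (if i₀ = 0 then (if T = 0 then 1 else 0)
        else if i₀ = d + 1 then (if T = d then -1 else 0) else 0)) +
      (if (if T = d + 1 then d + 1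
        else if i₀ = 0 then (if T = 0 then d else T - 1)
        else if i₀ = d + 1 then (if T = d then 0 else T + 1)
        else if T = i₀ - 1 then i₀ else if T = i₀ then i₀ - 1 else T) <
        (if i₀ = 0 then d + 1 else if i₀ = d + 1 then 0 else i₀) then 1 else 0) <
      (P' + (if i₀ = 0 then (if T' = 0 then 1 else 0)
        else if i₀ = d + 1 then (if T' = d then -1 else 0) else 0)) +
      (if (if T' = d + 1 then d + 1
        else if i₀ = 0 then (if T' = 0 then d else T' - 1)
        else if i₀ = d + 1 then (if T' = d then 0 else T' + 1)
        else if T' = i₀ - 1 then i₀ else if T' = i₀ then i₀ - 1 else T') <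
        (if i₀ = 0 then d + 1 else if i₀ = d + 1 then 0 else i₀) then 1 else 0))
    (hi : i ≤ d + 1) (hne : i ≠ i₀) :
    P' + (if T' < i then 1 else 0) = P + (if T < i then 1 else 0) := by
  by_cases h0 : i₀ = 0
  · subst h0
    clear e3 e4
    simp only [if_true] at hlt
    grind
  by_cases h1 : i₀ = d + 1
  · subst h1
    clear e3 e4
    simp only [if_true, if_neg h0] at hlt
    grind
  · simp only [h0, h1, if_false] at hlt
    rw [min_eq_left (by omega)] at e4
    clear e0 e2
    grind (splits := 25)

/-- For `c = (p, τ, i)`: the facet opposite to the `i`-th vertex is the one in the face `p 0 = M` of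
the simplex of divisions, that is, `i = 0` and vertex `0` is the only one at which the
first knife has not yet reached `M`. -/
def IsBoundary (M : ℤ) {d : ℕ} (c : (Fin (d + 1) → ℤ) × Perm (Fin (d + 1)) × ℕ) : Prop :=
  c.2.2 = 0 ∧ c.2.1 0 = 0 ∧ c.1 0 + 1 = M

/-- The neighbour across a door lies inside the simplex of divisions unless the door lies in the
face `p 0 = M`. If two knives `j` and `j + 1` crossed at the new vertex, then piece `j` would be
empty on the whole facet, so the label `j` would be missing there; hence `j = 0`. -/
theorem isCell_pivot {d : ℕ} {M : ℤ} {l : (Fin (d + 1) → ℤ) → Fin (d + 1 + 1)}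
    (hl : IsSperner M l)
    {c : (Fin (d + 1) → ℤ) × Perm (Fin (d + 1)) × ℕ} (hc : c.2.2 ≤ d + 1)
    (h : IsDoor l c.1 c.2.1 c.2.2) (hcell : IsCell M c.1 c.2.1) (hb : ¬ IsBoundary M c) :
    IsCell M (pivot c).1 (pivot c).2.1 := by
  have hc' : (pivot c).2.2 ≤ d + 1 := by
    simp only [pivot]; split_ifs <;> simp; omega
  intro i hi
  by_cases hne : i ≠ (pivot c).2.2
  · obtain ⟨i', h1, -, h3⟩ := vert_pivot _ hc' hi hne
    rw [← h3, pivot_pivot _ hc]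
    exact hcell i' h1
  push Not at hne
  subst hne
  intro j hj
  by_contra hlt
  push Not at hlt
  rw [knife_vert _ _ _ hi, knife_vert _ _ _ hi, knife_pivot, knife_pivot, moveTime_pivot _ hc,
    moveTime_pivot _ hc] at hlt
  have hinj := moveTime_inj c.2.1 (j := j) (k := j + 1)
  have hcell' : ∀ i ≤ d + 1, knife M c.1 (j + 1) + (if moveTime c.2.1 (j + 1) < i then 1 else 0)
      ≤ knife M c.1 j + (if moveTime c.2.1 j < i then 1 else 0) := by
    intro i hi
    rw [← knife_vert _ _ _ hi, ← knife_vert _ _ _ hi]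
    exact hcell i hi j hj
  have hl1 := moveTime_le c.2.1 j
  have hl2 := moveTime_le c.2.1 (j + 1)
  have hfi : (pivot c).2.2 = if c.2.2 = 0 then d + 1 else if c.2.2 = d + 1 then 0
      else c.2.2 := by
    simp only [pivot]; split_ifs <;> rfl
  rw [hfi] at hlt
  have key : ∀ i ≤ d + 1, i ≠ c.2.2 →
      knife M c.1 (j + 1) + (if moveTime c.2.1 (j + 1) < i then 1 else 0)
      = knife M c.1 j + (if moveTime c.2.1 j < i then 1 else 0) := by
    intro i hi hne
    have e1 := hcell' i hi
    have e0 := hcell' 0 (by omega)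
    have e2 := hcell' (d + 1) le_rfl
    have e3 := hcell' (c.2.2 - 1) (by omega)
    have e4 := hcell' (min (c.2.2 + 1) (d + 1)) (by omega)
    exact pivot_arith hc hl1 hl2 (fun h1 h2 => by have := hinj h1 (by omega); omega)
      e0 e1 e2 e3 e4 hlt hi hne
  by_cases hj0 : j = 0
  · subst hj0
    apply hb
    have k1 := key
    have hT0 : moveTime c.2.1 0 = d + 1 := rfl
    have hP0 : knife M c.1 0 = M := rfl
    have hT1 : moveTime c.2.1 (0 + 1) = c.2.1 0 := by simp [moveTime]
    have hP1 : knife M c.1 (0 + 1) = c.1 0 := by simp [knife]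
    rw [hT0, hP0, hT1, hP1] at key hlt hcell'
    have hlt1 := (c.2.1 0).2
    have e2 := hcell' (d + 1) le_rfl
    by_cases h0 : c.2.2 = 0
    · have e := key 1 (by omega) (by omega)
      rw [if_pos (by omega : (c.2.1 0 : ℕ) < d + 1)] at e2
      refine ⟨h0, Fin.ext ?_, ?_⟩
      · change (c.2.1 0 : ℕ) = 0
        split_ifs at e <;> omega
      · split_ifs at e <;> omega
    · exfalso
      have e := key 0 (by omega) (by omega)
      split_ifs at e e2 <;> omega
  · obtain ⟨i, hi, hne, hli⟩ := h ⟨j, by omega⟩ (by simpa [Fin.ext_iff] using hj0)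
    have := hl _ (hcell i hi)
    rw [hli] at this
    apply this
    rw [knife_vert _ _ _ hi, knife_vert _ _ _ hi]
    exact key i hi hne

/-! ### The face `p 0 = M` -/

open Classical in
/-- The labelling induced on the face `p 0 = M`. Piece `0` is empty there, so a Sperner labelling
does not use the label `0` and the other labels are shifted down; the value `0` in the first branch
is arbitrary. -/
noncomputable def lowerLabel (M : ℤ) {d : ℕ} (l : (Fin (d + 1) → ℤ) → Fin (d + 1 + 1)) :
    (Fin d → ℤ) → Fin (d + 1) :=
  fun q => if h : l (Fin.cons M q) = 0 then 0 else (l (Fin.cons M q)).pred h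

theorem knife_cons (M x : ℤ) {d : ℕ} (q : Fin d → ℤ) (j : ℕ) :
    knife M (Fin.cons x q : Fin (d + 1) → ℤ) (j + 1) = knife x q j := by
  cases j with
  | zero => simp [knife]
  | succ j =>
    by_cases h : j < d
    · have : (⟨j + 1, by omega⟩ : Fin (d + 1)) = Fin.succ ⟨j, h⟩ := rfl
      simp only [knife, h, Nat.add_lt_add_iff_right, dif_pos]
      rw [this, Fin.cons_succ]
    · simp [knife, h]

theorem knife_succ_congr (M M' : ℤ) {d : ℕ} (q : Fin d → ℤ) (j : ℕ) :
    knife M q (j + 1) = knife M' q (j + 1) := rfl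

theorem isDivision_cons {M : ℤ} {d : ℕ} {q : Fin d → ℤ} :
    IsDivision M (Fin.cons M q : Fin (d + 1) → ℤ) ↔ IsDivision M q := by
  constructor
  · intro h j hj
    have := h (j + 1) (by omega)
    rwa [knife_cons, knife_cons] at this
  · intro h j hj
    cases j with
    | zero => rw [knife_cons]; exact le_rfl
    | succ j => rw [knife_cons, knife_cons]; exact h j (by omega)

theorem succ_lowerLabel {M : ℤ} {d : ℕ} {l : (Fin (d + 1) → ℤ) → Fin (d + 1 + 1)}
    (hl : IsSperner M l) {q : Fin d → ℤ} (hq : IsDivision M q) :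
    (lowerLabel M l q).succ = l (Fin.cons M q) := by
  have h := hl _ (isDivision_cons.2 hq)
  have h0 : l (Fin.cons M q) ≠ 0 := by
    intro h0
    rw [h0] at h
    exact h (by simp [knife])
  simp [lowerLabel, h0]

theorem isSperner_lowerLabel {M : ℤ} {d : ℕ} {l : (Fin (d + 1) → ℤ) → Fin (d + 1 + 1)}
    (hl : IsSperner M l) : IsSperner M (lowerLabel M l) := by
  intro q hq
  have h := hl _ (isDivision_cons.2 hq)
  rw [← succ_lowerLabel hl hq, Fin.val_succ, knife_cons, knife_cons] at h
  exact h

/-- The vertices `1, 2, …` of the cell of the simplex over `(q, σ)` are the vertices of `(q, σ)`. -/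
theorem vert_boundary {M : ℤ} {d : ℕ} (q : Fin d → ℤ) (σ : Perm (Fin d)) (i : ℕ) :
    vert (Fin.cons (M - 1) q) (Perm.decomposeFin.symm (0, σ)) (i + 1) =
      (Fin.cons M (vert q σ i) : Fin (d + 1) → ℤ) := by
  funext k
  refine Fin.cases ?_ (fun k => ?_) k
  · simp [vert]
  · simp [vert]

/-- A cell `(q, σ)` of the face `p 0 = M` is the facet opposite to vertex `0` of the cell that starts
with first coordinate `M - 1` and raises it before all other moves. -/
theorem isCell_boundary {M : ℤ} (hM : 0 < M) {d : ℕ} {q : Fin d → ℤ} {σ : Perm (Fin d)} :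
    IsCell M (Fin.cons (M - 1) q) (Perm.decomposeFin.symm (0, σ)) ↔ IsCell M q σ := by
  constructor
  · intro h i hi
    rw [← isDivision_cons, ← vert_boundary]
    exact h (i + 1) (by omega)
  · intro h i hi
    cases i with
    | succ i => rw [vert_boundary, isDivision_cons]; exact h i (by omega)
    | zero =>
      intro j hj
      simp only [knife_vert M _ _ (Nat.zero_le _), Nat.not_lt_zero, if_false, add_zero]
      cases j with
      | zero => rw [knife_cons]; simp [knife]
      | succ j =>
        rw [knife_cons, knife_cons]
        cases j with
        | succ j =>
          have := h 0 (by omega) (j + 1) (by omega)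
          simp only [knife_vert M _ _ (Nat.zero_le _), Nat.not_lt_zero, if_false, add_zero]
            at this
          exact this
        | zero =>
          by_cases hd : 0 < d
          -- At the last vertex of `(q, σ)` the first coordinate is `q 0 + 1 ≤ M`.
          · have := h d le_rfl 0 (by omega)
            have h2 : knife M q 0 = M := rfl
            rw [knife_vert M _ _ le_rfl, knife_vert M _ _ le_rfl, h2] at this
            simp only [moveTime, hd, dif_pos, (σ ⟨0, hd⟩).2, if_true, lt_irrefl, if_false] at this
            have h1 : knife (M - 1) q (0 + 1) = knife M q (0 + 1) := rfl
            have h3 : knife (M - 1) q 0 = M - 1 := rfl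
            rw [h1, h3]
            omega
          · simp [knife, hd]
            omega

/-! ### Sperner's lemma -/

theorem knife_le {M : ℤ} {d : ℕ} {p : Fin d → ℤ} (h : IsDivision M p) {a b : ℕ} (hab : a ≤ b)
    (hb : b ≤ d + 1) : knife M p b ≤ knife M p a := by
  induction b, hab using Nat.le_induction with
  | base => exact le_rfl
  | succ b hab ih => exact (h b (by omega)).trans (ih (by omega))

theorem knife_mem {M : ℤ} {d : ℕ} {p : Fin d → ℤ} (h : IsDivision M p) (k : Fin d) :
    0 ≤ p k ∧ p k ≤ M := by
  have hk : knife M p (k + 1) = p k := by simp [knife]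
  constructor
  · have := knife_le h (a := k + 1) (b := d + 1) (by omega) le_rfl
    rw [hk] at this
    simpa [knife] using this
  · have := knife_le h (a := 0) (b := k + 1) (by omega) (by omega)
    rwa [hk] at this

theorem vert_zero {d : ℕ} (p : Fin d → ℤ) (τ : Perm (Fin d)) : vert p τ 0 = p := by
  funext k; simp [vert]

open Classical in
/-- The rainbow cells. The box `[0, M]^d` contains the base points of all cells and only serves to
make the set finite. -/
noncomputable def rainbowCells (M : ℤ) {d : ℕ} (l : (Fin d → ℤ) → Fin (d + 1)) :
    Finset ((Fin d → ℤ) × Perm (Fin d)) :=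
  {c ∈ Finset.Icc (0 : Fin d → ℤ) (fun _ => M) ×ˢ Finset.univ |
    IsCell M c.1 c.2 ∧ IsRainbow l c.1 c.2}

theorem IsCell.mem_Icc {M : ℤ} {d : ℕ} {p : Fin d → ℤ} {τ : Perm (Fin d)} (h : IsCell M p τ) :
    p ∈ Finset.Icc (0 : Fin d → ℤ) (fun _ => M) := by
  have h0 := h 0 (Nat.zero_le _)
  rw [vert_zero] at h0
  exact Finset.mem_Icc.2 ⟨fun k => (knife_mem h0 k).1, fun k => (knife_mem h0 k).2⟩

theorem mem_rainbowCells {M : ℤ} {d : ℕ} {l : (Fin d → ℤ) → Fin (d + 1)}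
    {c : (Fin d → ℤ) × Perm (Fin d)} :
    c ∈ rainbowCells M l ↔ IsCell M c.1 c.2 ∧ IsRainbow l c.1 c.2 := by
  simp only [rainbowCells, Finset.mem_filter, Finset.mem_product, Finset.mem_univ, and_true,
    and_iff_right_iff_imp]
  exact fun h => h.1.mem_Icc

open Classical in
/-- The pairs of a cell and a vertex index that form a door. -/
noncomputable def doors (M : ℤ) {d : ℕ} (l : (Fin d → ℤ) → Fin (d + 1)) :
    Finset ((Fin d → ℤ) × Perm (Fin d) × ℕ) :=
  {c ∈ Finset.Icc (0 : Fin d → ℤ) (fun _ => M) ×ˢ Finset.univ ×ˢ Finset.range (d + 1) |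
    IsCell M c.1 c.2.1 ∧ IsDoor l c.1 c.2.1 c.2.2}

theorem mem_doors {M : ℤ} {d : ℕ} {l : (Fin d → ℤ) → Fin (d + 1)}
    {c : (Fin d → ℤ) × Perm (Fin d) × ℕ} :
    c ∈ doors M l ↔ c.2.2 ≤ d ∧ IsCell M c.1 c.2.1 ∧ IsDoor l c.1 c.2.1 c.2.2 := by
  simp only [doors, Finset.mem_filter, Finset.mem_product, Finset.mem_univ, true_and,
    Finset.mem_range, Nat.lt_succ_iff]
  constructor
  · rintro ⟨⟨-, h1⟩, h2⟩
    exact ⟨h1, h2⟩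
  · rintro ⟨h1, h2⟩
    exact ⟨⟨h2.1.mem_Icc, h1⟩, h2⟩

/-- Count the doors cell by cell: a cell has an odd number of doors exactly when it is rainbow. -/
theorem odd_doors_iff_odd_rainbow (M : ℤ) {d : ℕ} (l : (Fin d → ℤ) → Fin (d + 1)) :
    Odd (doors M l).card ↔ Odd (rainbowCells M l).card := by
  classical
  rw [Finset.card_eq_sum_card_fiberwise (f := fun c => (c.1, c.2.1))
    (t := {c ∈ Finset.Icc (0 : Fin d → ℤ) (fun _ => M) ×ˢ Finset.univ | IsCell M c.1 c.2}),
    Finset.odd_sum_iff_odd_card_odd]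
  · rw [rainbowCells, ← Finset.filter_filter]
    refine iff_of_eq (congrArg (fun s : Finset _ => Odd s.card)
      (Finset.filter_congr fun c hc => ?_))
    rw [Finset.mem_filter] at hc
    rw [IsRainbow, ← odd_doors_iff]
    refine iff_of_eq (congrArg Odd ?_)
    refine Finset.card_bij' (fun x _ => x.2.2) (fun i _ => (c.1, c.2, i)) ?_ ?_ ?_ ?_
    · rintro ⟨p, τ, i⟩ h
      rw [Finset.mem_filter, mem_doors] at h
      obtain ⟨⟨h1, -, h2⟩, rfl⟩ := h
      rw [Finset.mem_filter, Finset.mem_range]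
      exact ⟨Nat.lt_succ_of_le h1, h2⟩
    · intro i h
      rw [Finset.mem_filter, Finset.mem_range] at h
      rw [Finset.mem_filter, mem_doors]
      exact ⟨⟨Nat.le_of_lt_succ h.1, hc.2, h.2⟩, rfl⟩
    · rintro ⟨p, τ, i⟩ h
      rw [Finset.mem_filter] at h
      obtain ⟨-, rfl⟩ := h
      rfl
    · intro i _; rfl
  · intro c hc
    have hc := mem_doors.1 hc
    simp only [Finset.coe_filter, Set.mem_ofPred_eq, Finset.mem_product, Finset.mem_univ, and_true]
    exact ⟨hc.2.1.mem_Icc, hc.2.1⟩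

open Classical in
/-- The doors in the face `p 0 = M` are the rainbow cells of the labelling induced on it. -/
theorem card_boundary_doors {M : ℤ} (hM : 0 < M) {d : ℕ}
    {l : (Fin (d + 1) → ℤ) → Fin (d + 1 + 1)} (hl : IsSperner M l) :
    ((doors M l).filter (IsBoundary M)).card = (rainbowCells M (lowerLabel M l)).card := by
  symm
  refine Finset.card_bij
    (fun c _ => (Fin.cons (M - 1) c.1, Perm.decomposeFin.symm (0, c.2), 0)) ?_ ?_ ?_
  · rintro ⟨q, σ⟩ h
    obtain ⟨h1, h2⟩ := mem_rainbowCells.1 h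
    rw [Finset.mem_filter, mem_doors]
    refine ⟨⟨Nat.zero_le _, (isCell_boundary hM).2 h1, ?_⟩, rfl, by simp, by simp⟩
    intro b hb
    obtain ⟨i, hi, hib⟩ := h2 (b.pred hb)
    refine ⟨i + 1, by omega, by simp, ?_⟩
    simp only
    rw [vert_boundary, ← succ_lowerLabel hl (h1 i hi), hib, Fin.succ_pred]
  · rintro ⟨q, σ⟩ _ ⟨q', σ'⟩ _ h
    simp only [Prod.mk.injEq, and_true] at h
    have h1 := (Fin.cons_right_injective (α := fun _ => ℤ) (M - 1)) h.1
    have h2 := Perm.decomposeFin.symm.injective h.2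
    simp only [Prod.mk.injEq, true_and] at h2
    rw [h1, h2]
  · rintro ⟨p, τ, i⟩ h
    rw [Finset.mem_filter, mem_doors] at h
    obtain ⟨⟨-, hcell, hdoor⟩, h0, hτ, hp⟩ := h
    simp only at hcell hdoor h0 hτ hp
    subst h0
    obtain ⟨⟨a, σ⟩, rfl⟩ := Perm.decomposeFin.symm.surjective τ
    rw [Perm.decomposeFin_symm_apply_zero] at hτ
    subst hτ
    have hpc : p = Fin.cons (M - 1) (Fin.tail p) := by
      conv_lhs => rw [← Fin.cons_self_tail p]
      congr 1
      omega
    generalize Fin.tail p = q at hpc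
    subst hpc
    have hq := (isCell_boundary hM).1 hcell
    refine ⟨(q, σ), mem_rainbowCells.2 ⟨hq, fun b => ?_⟩, rfl⟩
    obtain ⟨i, hi, hi0, hib⟩ := hdoor b.succ (Fin.succ_ne_zero b)
    obtain ⟨i, rfl⟩ : ∃ i', i = i' + 1 := ⟨i - 1, by omega⟩
    refine ⟨i, by omega, ?_⟩
    rw [vert_boundary, ← succ_lowerLabel hl (hq i (by omega))] at hib
    exact Fin.succ_injective _ hib

open Classical in
/-- `pivot` pairs up the doors that do not lie in the face `p 0 = M`. -/
theorem even_inner_doors {M : ℤ} {d : ℕ}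
    {l : (Fin (d + 1) → ℤ) → Fin (d + 1 + 1)} (hl : IsSperner M l) :
    Even ((doors M l).filter (fun c => ¬ IsBoundary M c)).card := by
  have key : (∑ _c ∈ (doors M l).filter (fun c => ¬ IsBoundary M c), (1 : ZMod 2)) = 0 := by
    refine Finset.sum_involution (fun c _ => pivot c) (fun _ _ => by decide) ?_ ?_ ?_
    · intro c hc _
      exact pivot_ne c (mem_doors.1 (Finset.mem_filter.1 hc).1).1
    · intro c hc
      obtain ⟨hd, hb⟩ := Finset.mem_filter.1 hc
      obtain ⟨h1, h2, h3⟩ := mem_doors.1 hd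
      refine Finset.mem_filter.2 ⟨mem_doors.2 ⟨?_, isCell_pivot hl h1 h3 h2 hb,
        isDoor_pivot h1 h3⟩, ?_⟩
      · simp only [pivot]; split_ifs <;> simp; omega
      · rintro ⟨e1, e2, e3⟩
        -- `c` would have `i = d + 1`, and its last vertex would have the first knife beyond `M`.
        obtain ⟨p, τ, i⟩ := c
        by_cases h0 : i = 0
        · simp [pivot, h0] at e1
        by_cases hi : i = d + 1
        · subst hi
          simp only [pivot, if_true, if_neg h0] at e2 e3
          have e4 := congrArg Fin.val e2
          simp only [trans_apply] at e4
          rw [val_finRotate] at e4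
          have e5 : (τ 0 : ℕ) = d := by
            by_contra hne
            rw [if_neg hne] at e4
            simp at e4
          rw [if_pos e5] at e3
          have := h2 (d + 1) le_rfl 0 (by omega)
          simp [knife, vert, e5] at this
          omega
        · simp [pivot, h0, hi] at e1
    · intro c hc
      exact pivot_pivot c (mem_doors.1 (Finset.mem_filter.1 hc).1).1
  rw [Finset.sum_const, nsmul_eq_mul, mul_one, ZMod.natCast_eq_zero_iff_even] at key
  exact key

/-- Sperner's lemma for the Kuhn triangulation, by induction on `d`. -/
theorem odd_rainbowCells {M : ℤ} (hM : 0 < M) {d : ℕ} (l : (Fin d → ℤ) → Fin (d + 1))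
    (hl : IsSperner M l) : Odd (rainbowCells M l).card := by
  classical
  induction d with
  | zero =>
    have : rainbowCells M l = {(Fin.elim0, 1)} := by
      ext c
      simp only [mem_rainbowCells, Finset.mem_singleton]
      refine iff_of_true ⟨?_, ?_⟩ (Subsingleton.elim _ _)
      · intro i _ j hj
        obtain rfl : j = 0 := by omega
        simp [knife, hM.le]
      · intro b
        exact ⟨0, le_rfl, Subsingleton.elim (α := Fin 1) _ _⟩
    simp [this]
  | succ d ih =>
    rw [← odd_doors_iff_odd_rainbow,
      ← Finset.card_filter_add_card_filter_not (IsBoundary M),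
      card_boundary_doors hM hl]
    exact (ih _ (isSperner_lowerLabel hl)).add_even (even_inner_doors hl)

theorem exists_rainbow_cell {M : ℤ} (hM : 0 < M) {d : ℕ} (l : (Fin d → ℤ) → Fin (d + 1))
    (hl : IsSperner M l) : ∃ p τ, IsCell M p τ ∧ IsRainbow l p τ := by
  obtain ⟨c, hc⟩ := Finset.card_pos.1 (odd_rainbowCells hM l hl).pos
  exact ⟨c.1, c.2, mem_rainbowCells.1 hc⟩

/-! ### Values of pieces cut inside items -/

open Finset in
theorem erase_min_Ioc {a b : ℕ} (h : (Ioc a b).Nonempty) :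
    (Ioc a b).erase ((Ioc a b).min' h) = Ioc (a + 1) b := by
  have hab : a < b := by simpa using h
  have hm : (Ioc a b).min' h = a + 1 := by
    refine le_antisymm (min'_le _ _ (by simp; omega)) (le_min' _ _ _ fun y hy => ?_)
    simp at hy; omega
  rw [hm]; ext x; simp; omega

open Finset in
theorem erase_max_Ioc {a b : ℕ} (h : (Ioc a (b + 1)).Nonempty) :
    (Ioc a (b + 1)).erase ((Ioc a (b + 1)).max' h) = Ioc a b := by
  have hab : a < b + 1 := by simpa using h
  have hm : (Ioc a (b + 1)).max' h = b + 1 := by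
    refine le_antisymm (max'_le _ _ _ fun y hy => ?_) (le_max' _ _ (by simp; omega))
    simp at hy; omega
  rw [hm]; ext x; simp

/-- The number `z` lies between `v⁻(B)` and `v⁺(B)`. -/
def Brackets (v : Finset ℕ → ℤ) (B : Finset ℕ) (z : ℤ) : Prop :=
  vminus v B ≤ z ∧ z ≤ vplus v B

theorem brackets_self {v : Finset ℕ → ℤ} (hv : v ∅ = 0) (B : Finset ℕ) : Brackets v B (v B) := by
  by_cases h : B.Nonempty
  · simp [Brackets, vminus, vplus, h]
  · rw [Finset.not_nonempty_iff_eq_empty] at h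
    subst h
    simp [Brackets, vminus, vplus, hv]

theorem brackets_left {v : Finset ℕ → ℤ} {x y : ℕ} (h : x < y) :
    Brackets v (Finset.Ioc x y) (v (Finset.Ioc (x + 1) y)) := by
  have hne : (Finset.Ioc x y).Nonempty := by simpa using h
  simp only [Brackets, vminus, vplus, hne, dif_pos, erase_min_Ioc]
  simp

theorem brackets_right {v : Finset ℕ → ℤ} {x y : ℕ} (h : x ≤ y) :
    Brackets v (Finset.Ioc x (y + 1)) (v (Finset.Ioc x y)) := by
  have hne : (Finset.Ioc x (y + 1)).Nonempty := by simp; omega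
  simp only [Brackets, vminus, vplus, hne, dif_pos, erase_max_Ioc]
  simp

/-- The middle one of three integers. -/
def median (x y z : ℤ) : ℤ := max (min x y) (min (max x y) z)

/-- If two of the three numbers are bracketed, then so is their median. -/
theorem Brackets.median {v : Finset ℕ → ℤ} {B : Finset ℕ} {x y z : ℤ}
    (h : Brackets v B x ∧ Brackets v B y ∨ Brackets v B x ∧ Brackets v B z ∨
      Brackets v B y ∧ Brackets v B z) : Brackets v B (median x y z) := by
  unfold Brackets _root_.median at *
  omega

/-- The value attached to the piece between the grid points `a ≤ b`, where every item is subdivided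
into `N` parts and so `a / N`, `b / N` count complete items. It is chosen such that
`brackets_cutValue` holds: whichever way the two knives are rounded to cuts between items, the
value is compatible with the resulting bundle. When both knives are inside an item and the left one
is less far into its item, three bundles may result from rounding, and the median fits all of them.
-/
def cutValue (N : ℕ) (v : Finset ℕ → ℤ) (a b : ℕ) : ℤ :=
  if a % N = 0 then v (Finset.Ioc (a / N) (b / N))
  else if b % N ≤ a % N then v (Finset.Ioc (a / N + 1) (b / N))
  else median (v (Finset.Ioc (a / N + 1) (b / N))) (v (Finset.Ioc (a / N) (b / N)))
    (v (Finset.Ioc (a / N + 1) (b / N + 1)))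

theorem div_lt_or_mod_le {N a b : ℕ} (hab : a ≤ b) :
    a / N < b / N ∨ a / N = b / N ∧ a % N ≤ b % N := by
  have h1 := Nat.div_add_mod a N
  have h2 := Nat.div_add_mod b N
  rcases (Nat.div_le_div_right (c := N) hab).lt_or_eq with h | h
  · exact Or.inl h
  · refine Or.inr ⟨h, ?_⟩
    rw [h] at h1
    omega

/-- Shifting both knives by the same offset `c` and rounding down yields a bundle that brackets
`cutValue`. -/
theorem brackets_cutValue {N c : ℕ} (hc : c < N) {v : Finset ℕ → ℤ} (hv : v ∅ = 0) {a b : ℕ}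
    (hab : a ≤ b) :
    Brackets v (Finset.Ioc ((a + c) / N) ((b + c) / N)) (cutValue N v a b) := by
  have hN : 0 < N := by omega
  have hle := div_lt_or_mod_le (N := N) hab
  have ha := Nat.mod_lt a hN
  have hb := Nat.mod_lt b hN
  rw [Nat.add_div hN, Nat.add_div hN, Nat.div_eq_of_lt hc, Nat.mod_eq_of_lt hc, cutValue]
  generalize a / N = x at *
  generalize b / N = y at *
  generalize a % N = α at *
  generalize b % N = β at *
  have hxy : x ≤ y := by omega
  simp only [add_zero]
  by_cases h0 : α = 0
  · rw [if_pos h0, if_neg (by omega : ¬ N ≤ α + c)]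
    by_cases h1 : N ≤ β + c
    · rw [if_pos h1]
      exact brackets_right hxy
    · rw [if_neg h1]
      exact brackets_self hv _
  rw [if_neg h0]
  by_cases h1 : β ≤ α
  · rw [if_pos h1]
    rcases hle with hlt | ⟨rfl, h2⟩
    · by_cases h3 : N ≤ α + c
      · rw [if_pos h3]
        by_cases h4 : N ≤ β + c
        · rw [if_pos h4]
          exact brackets_right hlt
        · rw [if_neg h4]
          exact brackets_self hv _
      · rw [if_neg h3, if_neg (by omega)]
        exact brackets_left hlt
    · have : α = β := by omega
      subst this
      have h5 : v (Finset.Ioc (x + 1) x) = v ∅ := by simp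
      rw [h5, Finset.Ioc_self]
      exact brackets_self hv _
  rw [if_neg h1]
  -- Each of the three possible roundings brackets at least two of the three arguments.
  apply Brackets.median
  by_cases h3 : N ≤ α + c
  · rw [if_pos h3, if_pos (by omega)]
    refine Or.inr (Or.inl ⟨?_, brackets_self hv _⟩)
    rcases hxy.lt_or_eq with hlt | rfl
    · exact brackets_right hlt
    · have h5 : v (Finset.Ioc (x + 1) x) = v ∅ := by simp
      rw [h5, Finset.Ioc_self]
      exact brackets_self hv _
  rw [if_neg h3]
  by_cases h4 : N ≤ β + c
  · rw [if_pos h4]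
    exact Or.inr (Or.inr ⟨brackets_right hxy, brackets_left (by omega)⟩)
  · rw [if_neg h4]
    refine Or.inl ⟨?_, brackets_self hv _⟩
    rcases hxy.lt_or_eq with hlt | rfl
    · exact brackets_left hlt
    · have h5 : v (Finset.Ioc (x + 1) x) = v ∅ := by simp
      rw [h5, add_zero, Finset.Ioc_self]
      exact brackets_self hv _

theorem cutValue_self {N : ℕ} {v : Finset ℕ → ℤ} (hv : v ∅ = 0) (a : ℕ) :
    cutValue N v a a = 0 := by
  simp [cutValue, hv]

theorem cutValue_nonneg {N m : ℕ} {v : Finset ℕ → ℤ}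
    (hv : ∀ S ⊆ Finset.Icc 1 m, 0 ≤ v S) {a b : ℕ} (hb : b ≤ m * N) :
    0 ≤ cutValue N v a b := by
  have h1 : b / N ≤ m := Nat.div_le_of_le_mul (by rwa [mul_comm])
  have hsub : ∀ x y, y ≤ m → 0 ≤ v (Finset.Ioc x y) := fun x y hy =>
    hv _ fun z hz => by simp at hz ⊢; omega
  unfold cutValue
  split_ifs with h0 h2
  · exact hsub _ _ h1
  · exact hsub _ _ h1
  · have h3 : b / N + 1 ≤ m := by
      by_contra hlt
      have h4 : b / N = m := by omega
      have h5 := Nat.div_add_mod b N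
      rw [h4, mul_comm] at h5
      omega
    have e1 := hsub (a / N + 1) _ h1
    have e2 := hsub (a / N) _ h1
    have e3 := hsub (a / N + 1) _ h3
    unfold median
    omega

/-! ### Owner labelling and rounding -/

/-- The agent who owns the grid point `p`: the coordinate sum modulo the number of agents.
Consecutive vertices of a cell differ by one in coordinate sum, so every cell has one vertex per
agent. -/
def owner {d : ℕ} (p : Fin d → ℤ) : ZMod (d + 1) := ((∑ k, p k : ℤ) : ZMod (d + 1))

theorem owner_vert {d : ℕ} (p : Fin d → ℤ) (τ : Perm (Fin d)) {i : ℕ} (hi : i ≤ d) :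
    owner (vert p τ i) = owner p + i := by
  have h : ∑ k, (if (τ k : ℕ) < i then (1 : ℤ) else 0) = i := by
    rw [Equiv.sum_comp τ (fun k : Fin d => if (k : ℕ) < i then (1 : ℤ) else 0),
      Fin.sum_univ_eq_sum_range (fun k => if k < i then (1 : ℤ) else 0), Finset.sum_boole]
    have : {k ∈ Finset.range d | k < i} = Finset.range i := by ext k; simp; omega
    simp [this]
  simp only [owner, vert, Finset.sum_add_distrib, h]
  push_cast
  rfl

/-- The owner of `p` has a favourite piece that is nonempty: empty pieces are worth `0` and no
piece is worth less. This is where non-negativity enters. -/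
theorem exists_preferred_label {d m : ℕ} (hm : 0 < m) (v : ZMod (d + 1) → Finset ℕ → ℤ)
    (hv0 : ∀ i, v i ∅ = 0) (hnonneg : ∀ i, ∀ S ⊆ Finset.Icc 1 m, 0 ≤ v i S)
    {M : ℤ} (hM : M = ((m * (d + 1) : ℕ) : ℤ)) (p : Fin d → ℤ) :
    ∃ l : Fin (d + 1), IsDivision M p →
      knife M p (l + 1) ≠ knife M p l ∧
      ∀ j ≤ d, cutValue (d + 1) (v (owner p)) (knife M p (j + 1)).toNat (knife M p j).toNat ≤
        cutValue (d + 1) (v (owner p)) (knife M p (l + 1)).toNat (knife M p l).toNat := by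
  classical
  by_cases hp : IsDivision M p
  swap
  · exact ⟨0, fun h => absurd h hp⟩
  have hM0 : 0 < M := by rw [hM]; positivity
  let S : Finset (Fin (d + 1)) := {j | knife M p (j + 1) ≠ knife M p j}
  have hS : S.Nonempty := by
    by_contra hS
    rw [Finset.not_nonempty_iff_eq_empty] at hS
    have heq : ∀ j ≤ d + 1, knife M p j = M := by
      intro j
      induction j with
      | zero => intro _; rfl
      | succ j ih =>
        intro hj
        rw [← ih (by omega)]
        by_contra hne
        have : (⟨j, by omega⟩ : Fin (d + 1)) ∈ S := Finset.mem_filter.2 ⟨Finset.mem_univ _, hne⟩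
        rw [hS] at this
        simp at this
    have := heq (d + 1) le_rfl
    simp [knife] at this
    omega
  obtain ⟨l, hl, hmax⟩ := S.exists_max_image
    (fun j => cutValue (d + 1) (v (owner p)) (knife M p (j + 1)).toNat (knife M p j).toNat) hS
  refine ⟨l, fun _ => ⟨(Finset.mem_filter.1 hl).2, fun j hj => ?_⟩⟩
  by_cases hj2 : knife M p (j + 1) = knife M p j
  · rw [hj2, cutValue_self (hv0 _)]
    refine cutValue_nonneg (hnonneg _) ?_
    have h1 := knife_le hp (Nat.zero_le l) (by omega)
    have h2 : knife M p 0 = M := rfl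
    rw [h2] at h1
    exact Int.toNat_le.2 (h1.trans hM.le)
  · exact hmax ⟨j, by omega⟩ (Finset.mem_filter.2 ⟨Finset.mem_univ _, hj2⟩)

/-- The `d` coordinates exclude at most `d` of the `d + 1` offsets `c`. For the one obtained,
raising `p k` to `p k + 1` does not change the value of `(p k + c) / (d + 1)`. -/
theorem exists_offset {d : ℕ} (p : Fin d → ℤ) :
    ∃ c < d + 1, ∀ k, ((p k + c + 1 : ℤ) : ZMod (d + 1)) ≠ 0 := by
  have hns : ¬ Function.Surjective (fun k : Fin d => (-(p k : ZMod (d + 1)) - 1)) := by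
    intro hs
    have := Fintype.card_le_of_surjective _ hs
    rw [ZMod.card, Fintype.card_fin] at this
    omega
  simp only [Function.Surjective, not_forall, not_exists] at hns
  obtain ⟨e, he⟩ := hns
  refine ⟨e.val, e.val_lt, fun k hk => he k ?_⟩
  push_cast at hk
  rw [ZMod.natCast_zmod_val] at hk
  linear_combination -hk

/-- With the offset of `exists_offset`, rounding gives the same cuts at all vertices of a cell. -/
theorem round_vert {d c : ℕ} {M : ℤ} {p : Fin d → ℤ} {τ : Perm (Fin d)} (hp : IsDivision M p)
    (hc : ∀ k, ((p k + c + 1 : ℤ) : ZMod (d + 1)) ≠ 0) {i : ℕ} (hi : i ≤ d) (j : ℕ) :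
    ((knife M (vert p τ i) j).toNat + c) / (d + 1) = ((knife M p j).toNat + c) / (d + 1) := by
  rw [knife_vert _ _ _ hi]
  split_ifs with h
  swap
  · simp
  cases j with
  | zero => simp [moveTime] at h; omega
  | succ j =>
    by_cases hj : j < d
    swap
    · simp [moveTime, hj] at h; omega
    have hk : knife M p (j + 1) = p ⟨j, hj⟩ := by simp [knife, hj]
    have h0 := (knife_mem hp ⟨j, hj⟩).1
    have hcj := hc ⟨j, hj⟩
    rw [hk]
    obtain ⟨x, hx⟩ := Int.eq_ofNat_of_zero_le h0
    rw [hx] at hcj ⊢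
    have e : ((x : ℤ) + 1).toNat + c = x + c + 1 := by omega
    rw [e, Int.toNat_natCast, Nat.succ_div, if_neg, add_zero]
    intro hdvd
    apply hcj
    rw [← ZMod.natCast_eq_zero_iff] at hdvd
    exact_mod_cast hdvd

/-! ### Existence of a fair allocation -/

/-- For every instance with non-negative valuations there is a connected
allocation that is `EF1P_g^c`: `v_i⁺(A_i) ≥ v_i⁻(A_j)` for all `i, j`. -/
theorem ef1pgc_exists_nonneg (n m : ℕ) (hn : 0 < n) (v : Fin n → Finset ℕ → ℤ)
    (hv0 : ∀ i, v i ∅ = 0)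
    (hnonneg : ∀ i : Fin n, ∀ S ⊆ Finset.Icc 1 m, 0 ≤ v i S) :
    ∃ A : Fin n → Finset ℕ,
      IsAllocation m A ∧ (∀ i, IsConnectedBundle (A i)) ∧
      ∀ i j : Fin n, vminus (v i) (A j) ≤ vplus (v i) (A i) := by
  obtain ⟨d, rfl⟩ : ∃ d, n = d + 1 := ⟨n - 1, by omega⟩
  rcases Nat.eq_zero_or_pos m with rfl | hm
  · refine ⟨fun _ => ∅, ⟨fun _ _ _ => Finset.disjoint_empty_left _, by ext; simp⟩,
      fun _ => ⟨1, 0, by simp⟩, fun i j => by simp [vminus, vplus]⟩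
  obtain ⟨M, hM⟩ : ∃ M : ℤ, M = ((m * (d + 1) : ℕ) : ℤ) := ⟨_, rfl⟩
  choose l hl using fun p : Fin d → ℤ => exists_preferred_label hm v hv0 hnonneg hM p
  obtain ⟨p, τ, hcell, hrain⟩ := exists_rainbow_cell (by rw [hM]; positivity) l
    (fun p hp => (hl p hp).1)
  have hp : IsDivision M p := by
    have := hcell 0 (Nat.zero_le _)
    rwa [vert_zero] at this
  obtain ⟨c, hcd, hc⟩ := exists_offset p
  -- `q j` is the position of the `j`-th knife rounded to a cut between two items.
  set q : ℕ → ℕ := fun j => ((knife M p j).toNat + c) / (d + 1) with hq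
  have hq0 : q 0 = m := by
    simp only [hq, knife, hM, Int.toNat_natCast]
    rw [mul_comm, Nat.mul_add_div (Nat.succ_pos d), Nat.div_eq_of_lt hcd, add_zero]
  have hqd : q (d + 1) = 0 := by
    simp [hq, knife, Nat.div_eq_of_lt hcd]
  have hqanti : ∀ a b, a ≤ b → b ≤ d + 1 → q b ≤ q a := fun a b hab hb =>
    Nat.div_le_div_right (Nat.add_le_add_right (Int.toNat_le_toNat (knife_le hp hab hb)) c)
  -- The vertex `I a` of the cell is the one owned by agent `a`, and `s a` is its label.
  let I : ZMod (d + 1) → ℕ := fun a => (a - owner p).val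
  have hI : ∀ a, I a ≤ d := fun a => Nat.lt_succ_iff.1 (ZMod.val_lt _)
  have hown : ∀ a, owner (vert p τ (I a)) = a := fun a => by
    rw [owner_vert _ _ (hI a), ZMod.natCast_zmod_val]; ring
  let s : Fin (d + 1) → Fin (d + 1) := fun a => l (vert p τ (I a))
  have hs : Function.Injective s := by
    apply Finite.injective_iff_surjective.2
    intro b
    obtain ⟨i, hi, rfl⟩ := hrain b
    refine ⟨owner (vert p τ i), ?_⟩
    have : I (owner (vert p τ i)) = i := by
      simp only [I]
      rw [owner_vert _ _ hi, add_sub_cancel_left, ZMod.val_natCast_of_lt (by omega)]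
    simp only [s, this]
  have hsurj := Finite.injective_iff_surjective.1 hs
  refine ⟨fun a => Finset.Ioc (q (s a + 1)) (q (s a)), ⟨?_, ?_⟩, ?_, ?_⟩
  · intro a b hab
    rw [Finset.disjoint_left]
    intro x hx hx'
    simp only [Finset.mem_Ioc] at hx hx'
    have hne : (s a : ℕ) ≠ s b := fun h => hab (hs (Fin.ext h))
    rcases lt_or_gt_of_ne hne with h | h
    · have := hqanti (s a + 1) (s b) h (by omega)
      omega
    · have := hqanti (s b + 1) (s a) h (by omega)
      omega
  · ext x
    simp only [Finset.mem_biUnion, Finset.mem_univ, true_and, Finset.mem_Ioc, Finset.mem_Icc]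
    constructor
    · rintro ⟨a, h1, h2⟩
      have := hqanti 0 (s a) (Nat.zero_le _) (by omega)
      omega
    · rintro ⟨h1, h2⟩
      -- The item `x` lies in the first piece whose left end is below `x`.
      have hex : ∃ j, q (j + 1) < x := ⟨d, by omega⟩
      classical
      have hspec := Nat.find_spec hex
      have hmin : ∀ j < Nat.find hex, ¬ q (j + 1) < x := fun j hj => Nat.find_min hex hj
      have hle : Nat.find hex ≤ d := Nat.find_min' hex (by omega)
      generalize Nat.find hex = j at *
      obtain ⟨a, ha⟩ := hsurj ⟨j, by omega⟩
      refine ⟨a, ?_⟩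
      rw [ha]
      refine ⟨hspec, ?_⟩
      cases j with
      | zero => simp only; omega
      | succ j => exact not_lt.1 (hmin j (by omega))
  · intro a
    refine ⟨q (s a + 1) + 1, q (s a), ?_⟩
    ext x; simp
  -- By the choice of `c`, all agents see the same bundles after rounding, so each bundle brackets
  -- the value its piece has for agent `a` at the vertex owned by `a`, where piece `s a` is a
  -- best one.
  · intro a b
    have hdiv := hcell (I a) (hI a)
    have hbr : ∀ j ≤ d, Brackets (v a) (Finset.Ioc (q (j + 1)) (q j))
        (cutValue (d + 1) (v a) (knife M (vert p τ (I a)) (j + 1)).toNat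
          (knife M (vert p τ (I a)) j).toNat) := by
      intro j hj
      have := brackets_cutValue hcd (hv0 a) (Int.toNat_le_toNat (hdiv j hj))
      rwa [round_vert hp hc (hI a), round_vert hp hc (hI a)] at this
    have hpref := (hl _ hdiv).2 (s b) (by omega)
    rw [hown a] at hpref
    exact (hbr (s b) (by omega)).1.trans (hpref.trans (hbr (s a) (by omega)).2)
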